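/- Let n ≥ 1 and for a subset A of [n+1] let v_A ∈ H denote the orthogonal projection onto H of the vector 2χ_A − j, where χ_A is the characteristic vector of A and j = (1, …, 1). Then for any two distinct subsets A, B of [n+1] with ∅ ≠ A, B ≠ [n+1]: ‖v_A − v_B‖_Z = 1 if A ⊆ B or B ⊆ A, and ‖v_A − v_B‖_Z = 2 otherwise (i.e., if A ⊄ B and B ⊄ A). -/

import Mathlib

/-- The norm of the space `M_Z^n`: `‖x‖_Z = ½(maxᵢ x(i) − minᵢ x(i))`. -/
noncomputable def normZ {n : ℕ} (x : Fin (n + 1) → ℝ) : ℝ :=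
  (Finset.univ.sup' Finset.univ_nonempty x - Finset.univ.inf' Finset.univ_nonempty x) / 2

/-- The orthogonal projection of `ℝ^{n+1}` onto the hyperplane `H = {x : Σᵢ x(i) = 0}`
(along the all-ones vector). -/
noncomputable def projH {n : ℕ} (x : Fin (n + 1) → ℝ) : Fin (n + 1) → ℝ :=
  fun i => x i - (∑ j, x j) / (n + 1)

/-- The vertex of `Z_n` associated to a subset `A` of `[n+1]`: the orthogonal
projection onto `H` of `2χ_A − j`. -/
noncomputable def vertexZ {n : ℕ} (A : Finset (Fin (n + 1))) : Fin (n + 1) → ℝ :=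
  projH fun i => 2 * (if i ∈ A then (1 : ℝ) else 0) - 1

theorem normZ_eq_aux {n : ℕ} (x : Fin (n + 1) → ℝ) (i j : Fin (n + 1))
    (hi : ∀ k, x k ≤ x i) (hj : ∀ k, x j ≤ x k) : normZ x = (x i - x j) / 2 := by
  have h1 : Finset.univ.sup' Finset.univ_nonempty x = x i :=
    le_antisymm (Finset.sup'_le _ _ fun k _ => hi k) (Finset.le_sup' x (Finset.mem_univ i))
  have h2 : Finset.univ.inf' Finset.univ_nonempty x = x j :=
    le_antisymm (Finset.inf'_le x (Finset.mem_univ j)) (Finset.le_inf' _ _ fun k _ => hj k)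
  rw [normZ, h1, h2]

theorem vertexZ_sub_aux {n : ℕ} (A B : Finset (Fin (n + 1))) :
    ∃ c : ℝ, ∀ k, (vertexZ A - vertexZ B) k =
      2 * (if k ∈ A then (1 : ℝ) else 0) - 2 * (if k ∈ B then (1 : ℝ) else 0) + c := by
  refine ⟨(∑ j, (2 * (if j ∈ B then (1 : ℝ) else 0) - 1)) / (n + 1)
    - (∑ j, (2 * (if j ∈ A then (1 : ℝ) else 0) - 1)) / (n + 1), fun k => ?_⟩
  simp only [Pi.sub_apply, vertexZ, projH]
  ring

/-- For distinct proper nonempty subsets `A, B` of `[n+1]`, the distance in `M_Z^n`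
between the corresponding vertices `v_A, v_B` of `Z_n` is `1` if `A ⊆ B` or `B ⊆ A`,
and `2` otherwise. -/
theorem dist_between_vertices (n : ℕ) (hn : 1 ≤ n) (A B : Finset (Fin (n + 1)))
    (hA : A.Nonempty) (hA' : A ≠ Finset.univ)
    (hB : B.Nonempty) (hB' : B ≠ Finset.univ) (hAB : A ≠ B) :
    ((A ⊆ B ∨ B ⊆ A) → normZ (vertexZ A - vertexZ B) = 1) ∧
    (¬ A ⊆ B → ¬ B ⊆ A → normZ (vertexZ A - vertexZ B) = 2) := by
  obtain ⟨c, hc⟩ := vertexZ_sub_aux A B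
  refine ⟨?_, ?_⟩
  · rintro (h | h)
    · obtain ⟨i, hi⟩ := hA
      obtain ⟨j, hj, hj'⟩ := Finset.not_subset.mp fun h' => hAB (h.antisymm h')
      rw [normZ_eq_aux _ i j]
      · simp only [hc, hi, h hi, hj, hj', if_true, if_false]; ring
      all_goals
        intro k
        have := @h k
        simp only [hc, hi, h hi, hj, hj', if_true, if_false]
        split_ifs <;> first | linarith | tauto
    · obtain ⟨i, hi⟩ := hB
      obtain ⟨j, hj, hj'⟩ := Finset.not_subset.mp fun h' => hAB (Finset.Subset.antisymm h' h)
      rw [normZ_eq_aux _ j i]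
      · simp only [hc, hi, h hi, hj, hj', if_true, if_false]; ring
      all_goals
        intro k
        have := @h k
        simp only [hc, hi, h hi, hj, hj', if_true, if_false]
        split_ifs <;> first | linarith | tauto
  · intro h1 h2
    obtain ⟨i, hi, hi'⟩ := Finset.not_subset.mp h1
    obtain ⟨j, hj, hj'⟩ := Finset.not_subset.mp h2
    rw [normZ_eq_aux _ i j]
    · simp only [hc, hi, hi', hj, hj', if_true, if_false]; ring
    all_goals
      intro k
      simp only [hc, hi, hi', hj, hj', if_true, if_false]
      split_ifs <;> linarith
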